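/- Let γ₁, …, γ_M be nonnegative measurable real random variables on a probability space (no independence required), let M ≥ 1, and let R₁ ≥ 0. Then Pr[∏_{l=1}^M (1 + γ_l) ≤ 2^{R₁}] ≤ Pr[∏_{l=1}^M γ_l ≤ (2^{R₁/M} − 1)^M]. -/

import Mathlib

open MeasureTheory ProbabilityTheory Real

theorem mink_aux (M : ℕ) (hM : 1 ≤ M) (x : Fin M → ℝ) (hx : ∀ l, 0 ≤ x l) :
    1 + (∏ l, x l) ^ ((M : ℝ)⁻¹) ≤ (∏ l, (1 + x l)) ^ ((M : ℝ)⁻¹) := by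
  have hM0 : (M : ℝ) ≠ 0 := by
    have : M ≠ 0 := by omega
    exact_mod_cast this
  have hp : ∀ l, 0 < 1 + x l := fun l => by linarith [hx l]
  have hw : ∑ _l : Fin M, (M : ℝ)⁻¹ = 1 := by simp [hM0]
  have h1 := Real.geom_mean_le_arith_mean_weighted Finset.univ (fun _ : Fin M => (M : ℝ)⁻¹)
    (fun l => 1 / (1 + x l)) (fun _ _ => by positivity) hw
    (fun l _ => div_nonneg zero_le_one (hp l).le)
  have h2 := Real.geom_mean_le_arith_mean_weighted Finset.univ (fun _ : Fin M => (M : ℝ)⁻¹)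
    (fun l => x l / (1 + x l)) (fun _ _ => by positivity) hw
    (fun l _ => div_nonneg (hx l) (hp l).le)
  have hsum : ∑ l, (M : ℝ)⁻¹ * (1 / (1 + x l)) + ∑ l, (M : ℝ)⁻¹ * (x l / (1 + x l)) = 1 := by
    rw [← Finset.sum_add_distrib]
    refine Eq.trans ?_ hw
    refine Finset.sum_congr rfl fun l _ => ?_
    have := (hp l).ne'
    field_simp
  have hP : 0 < ∏ l, (1 + x l) := Finset.prod_pos fun l _ => hp l
  have hPw := Real.rpow_pos_of_pos hP ((M : ℝ)⁻¹)
  rw [Real.finsetProd_rpow _ _ (fun l _ => div_nonneg zero_le_one (hp l).le),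
    Finset.prod_div_distrib, Real.div_rpow (by simp) hP.le] at h1
  rw [Real.finsetProd_rpow _ _ (fun l _ => div_nonneg (hx l) (hp l).le),
    Finset.prod_div_distrib, Real.div_rpow (Finset.prod_nonneg fun l _ => hx l) hP.le] at h2
  have h3 := add_le_add h1 h2
  rw [hsum, ← add_div, div_le_one hPw] at h3
  simpa using h3

/-- The outage probability bound:
`Pr[∏ (1 + γ_l) ≤ 2^{R₁}] ≤ Pr[∏ γ_l ≤ (2^{R₁/M} − 1)^M]` for nonnegative measurable
random variables `γ_l`, `M ≥ 1`, and `R₁ ≥ 0`. -/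
theorem outage_prob_upper_bound
    {Ω : Type*} [MeasureSpace Ω] [IsProbabilityMeasure (ℙ : Measure Ω)]
    (M : ℕ) (hM : 1 ≤ M) (γ : Fin M → Ω → ℝ) (hmeas : ∀ l, Measurable (γ l))
    (hnonneg : ∀ l ω, 0 ≤ γ l ω) (R₁ : ℝ) (hR₁ : 0 ≤ R₁) :
    ℙ {ω | ∏ l, (1 + γ l ω) ≤ (2 : ℝ) ^ R₁}
      ≤ ℙ {ω | ∏ l, γ l ω ≤ ((2 : ℝ) ^ (R₁ / M) - 1) ^ M} := by
  refine measure_mono fun ω hω => ?_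
  simp only [Set.mem_ofPred_eq] at hω ⊢
  have hM0 : M ≠ 0 := by omega
  have hprod : 0 ≤ ∏ l, γ l ω := Finset.prod_nonneg fun l _ => hnonneg l ω
  have h := mink_aux M hM (fun l => γ l ω) (fun l => hnonneg l ω)
  have h2 : (∏ l, (1 + γ l ω)) ^ ((M : ℝ)⁻¹) ≤ ((2 : ℝ) ^ R₁) ^ ((M : ℝ)⁻¹) :=
    Real.rpow_le_rpow (Finset.prod_nonneg fun l _ => by linarith [hnonneg l ω]) hω (by positivity)
  rw [← Real.rpow_mul (by norm_num), ← div_eq_mul_inv] at h2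
  have h3 : (∏ l, γ l ω) ^ ((M : ℝ)⁻¹) ≤ (2 : ℝ) ^ (R₁ / M) - 1 := by linarith
  have h4 := pow_le_pow_left₀ (Real.rpow_nonneg hprod _) h3 M
  rwa [Real.rpow_inv_natCast_pow hprod hM0] at h4
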